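/- In the critical-execution setting (a recoverable wait-free binary consensus algorithm for the n processes, a configuration C, an integer z ≥ 1, and α ∈ 𝓔*_z(C) critical with respect to 𝓔*_z(C)), there is at least one process on team 0 in Cα and at least one process on team 1 in Cα. -/

import Mathlib

/-!
Fix `v`.  Since `α` is bivalent, some extension `αβ` decides `v`.  A step keeps an execution inside
`𝓔*_z`, so every `α p_j` is univalent.  If `v` is already decided in `α`, then every `α p_j` is
`v`-univalent.  If `β` begins with a step `p_j`, then `α p_j` is univalent and extends to a decision
of `v`, so it is `v`-univalent.

The remaining case is that `β` begins with a crash `c_i`; then `α c_i` is `v`-univalent, and `i ≠ 0`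
because `p_0` never crashes.  A crash of `p_i` commutes with a step of `p_0`
(`applyEvent_crash_step_comm`), so `α c_i p_0` and `α p_0 c_i` lead to the same configuration, and
both executions are in `𝓔*_z`.  In that configuration `p_i` is in its initial state, so recoverable
wait-freedom makes it decide some `w` when it runs alone (`exists_solo_decision`).  This extends
`α c_i`, so `w = v`; it also extends the univalent `α p_0`, which is therefore `v`-univalent.  Hence
`p_0` is on team `v`.
-/

namespace RecoverableConsensus

/-- A deterministic object type: a set of values, operations and responses together with a
transition function assigning to each (value, operation) pair a unique response and a unique
resulting value. -/
structure DetType : Type 1 where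
  Value : Type
  Op : Type
  Resp : Type
  δ : Value → Op → Resp × Value

/-- A type is readable if it has a Read operation that returns (an injective encoding of)
the current value of the object without changing it. -/
def Readable (T : DetType) : Prop :=
  ∃ (read : T.Op) (ι : T.Value → T.Resp),
    Function.Injective ι ∧ ∀ v, T.δ v read = (ι v, v)

/-- The register type over the value set `V`: the operation `none` is Read (returning the
current value without changing it) and `some v` is Write(v) (changing the value to `v`). -/
def RegisterType (V : Type) : DetType where
  Value := V
  Op := Option V
  Resp := V
  δ := fun u op =>
    match op with
    | none => (u, u)
    | some v => (v, v)

def IsRegister (T : DetType) : Prop := ∃ V : Type, T = RegisterType V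

/-- An event is either a step by a process or a crash of a process. -/
inductive Event (n : ℕ) : Type where
  | step : Fin n → Event n
  | crash : Fin n → Event n
deriving DecidableEq

/-- An algorithm for `n` processes: a collection of shared objects, each with a deterministic
type and an initial value, and for each process a deterministic state machine with an initial
state depending on the process's binary input.  Each state determines the process's next step
(`pending`: an operation applied to a designated object, or `none` for a no-op); the state
reached after a step is determined by the current state and the response received (`next`).
`output i s = some v` means that `s` is an output state of process `i` for the value `v`;
processes in output states take only no-op steps. -/
structure Algorithm (n : ℕ) : Type 1 where
  ObjIdx : Type
  objType : ObjIdx → DetType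
  objInit : (o : ObjIdx) → (objType o).Value
  PState : Fin n → Type
  init : (i : Fin n) → Bool → PState i
  pending : (i : Fin n) → PState i → Option ((o : ObjIdx) × (objType o).Op)
  next : (i : Fin n) → PState i → (o : ObjIdx) → (objType o).Resp → PState i
  output : (i : Fin n) → PState i → Option Bool
  output_noop : ∀ i s, output i s ≠ none → pending i s = none

/-- A configuration assigns a state to each process and a value to each object. -/
structure Config {n : ℕ} (A : Algorithm n) : Type where
  pstate : (i : Fin n) → A.PState i
  oval : (o : A.ObjIdx) → (A.objType o).Value

variable {n : ℕ}

/-- The effect of one event on a configuration.  A crash of `p_i` resets `p_i` to its initial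
state (for its input) and leaves all object values unchanged; a step of `p_i` applies its
pending operation (if any) to the designated object, receiving the response determined by the
type's transition function. -/
noncomputable def applyEvent (A : Algorithm n) (input : Fin n → Bool) (C : Config A) :
    Event n → Config A
  | .crash i => { C with pstate := Function.update C.pstate i (A.init i (input i)) }
  | .step i =>
    letI : DecidableEq A.ObjIdx := Classical.decEq _
    match A.pending i (C.pstate i) with
    | none => C
    | some ⟨o, op⟩ =>
      { pstate := Function.update C.pstate i
          (A.next i (C.pstate i) o ((A.objType o).δ (C.oval o) op).1),
        oval := Function.update C.oval o ((A.objType o).δ (C.oval o) op).2 }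

/-- Since the algorithm is deterministic, a finite execution from `C` is determined by its
schedule, i.e. its list of events; `run A input C σ` is the configuration `Cσ` reached by
applying the events of `σ` in order from `C`. -/
noncomputable def run (A : Algorithm n) (input : Fin n → Bool) (C : Config A) :
    List (Event n) → Config A
  | [] => C
  | e :: σ => run A input (applyEvent A input C e) σ

/-- The initial configuration: every process in its initial state, every object at its
initial value. -/
def initConfig (A : Algorithm n) (input : Fin n → Bool) : Config A :=
  ⟨fun i => A.init i (input i), A.objInit⟩

/-- Process `i` has decided `v` in `Cσ`: at some point along the execution `σ` from `C`,
process `i` was in an output state for `v`. -/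
def HasDecided (A : Algorithm n) (input : Fin n → Bool) (C : Config A)
    (σ : List (Event n)) (i : Fin n) (v : Bool) : Prop :=
  ∃ τ, τ <+: σ ∧ A.output i ((run A input C τ).pstate i) = some v

def CrashFree (σ : List (Event n)) : Prop := ∀ i : Fin n, Event.crash i ∉ σ

/-- The first `k` events of an infinite execution. -/
def initSeg (e : ℕ → Event n) (k : ℕ) : List (Event n) := (List.range k).map e

/-- Agreement: in every execution no two processes decide different values. -/
def Agreement (A : Algorithm n) : Prop :=
  ∀ (input : Fin n → Bool) (σ : List (Event n)) (i j : Fin n) (v w : Bool),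
    HasDecided A input (initConfig A input) σ i v →
    HasDecided A input (initConfig A input) σ j w → v = w

/-- Validity: every decided value is the input of some process. -/
def Validity (A : Algorithm n) : Prop :=
  ∀ (input : Fin n → Bool) (σ : List (Event n)) (i : Fin n) (v : Bool),
    HasDecided A input (initConfig A input) σ i v → ∃ j, input j = v

/-- Recoverable wait-freedom: every process, starting from its initial state, either crashes
or decides within a finite number of its own steps.  Equivalently: in every infinite execution
in which process `i` starts at (or is reset by a crash to) its initial state, takes infinitely
many steps and crashes only finitely often, it eventually reaches an output state. -/
def RecWaitFree (A : Algorithm n) : Prop :=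
  ∀ (input : Fin n → Bool) (C : Config A) (e : ℕ → Event n) (i : Fin n),
    (C.pstate i = A.init i (input i) ∨ ∃ k, e k = Event.crash i) →
    (∀ m, ∃ k, m ≤ k ∧ e k = Event.step i) →
    (∃ m, ∀ k, m ≤ k → e k ≠ Event.crash i) →
    ∃ (k : ℕ) (v : Bool), A.output i ((run A input C (initSeg e k)).pstate i) = some v

/-- A recoverable wait-free binary consensus algorithm. -/
def SolvesRecConsensus (A : Algorithm n) : Prop :=
  Agreement A ∧ Validity A ∧ RecWaitFree A

/-- Agreement restricted to crash-free executions. -/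
def AgreementCF (A : Algorithm n) : Prop :=
  ∀ (input : Fin n → Bool) (σ : List (Event n)), CrashFree σ →
    ∀ (i j : Fin n) (v w : Bool),
      HasDecided A input (initConfig A input) σ i v →
      HasDecided A input (initConfig A input) σ j w → v = w

/-- Validity restricted to crash-free executions. -/
def ValidityCF (A : Algorithm n) : Prop :=
  ∀ (input : Fin n → Bool) (σ : List (Event n)), CrashFree σ →
    ∀ (i : Fin n) (v : Bool),
      HasDecided A input (initConfig A input) σ i v → ∃ j, input j = v

/-- Wait-freedom: in crash-free executions, every process that takes infinitely many steps
decides. -/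
def WaitFree (A : Algorithm n) : Prop :=
  ∀ (input : Fin n → Bool) (e : ℕ → Event n),
    (∀ (k : ℕ) (i : Fin n), e k ≠ Event.crash i) →
    ∀ i : Fin n, (∀ m, ∃ k, m ≤ k ∧ e k = Event.step i) →
    ∃ (k : ℕ) (v : Bool),
      A.output i ((run A input (initConfig A input) (initSeg e k)).pstate i) = some v

/-- A wait-free binary consensus algorithm (for the model in which crashes are permanent,
i.e. only crash-free executions are relevant). -/
def SolvesWFConsensus (A : Algorithm n) : Prop :=
  AgreementCF A ∧ ValidityCF A ∧ WaitFree A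

/-- The number of crashes of process `i` in `σ`. -/
def crashCount (i : Fin n) (σ : List (Event n)) : ℕ :=
  (σ.filter fun e => decide (e = Event.crash i)).length

def isStepBelow (i : Fin n) : Event n → Bool
  | .step j => decide (j < i)
  | .crash _ => false

/-- The total number of steps taken by processes `p_0, …, p_{i-1}` in `σ`. -/
def stepsBelow (i : Fin n) (σ : List (Event n)) : ℕ := (σ.filter (isStepBelow i)).length

/-- The crash bound: for every process `p_i`, the number of crashes of `p_i` is at most
`z·n` times the total number of steps of `p_0, …, p_{i-1}` (for `i = 0` this says that `p_0`
never crashes). -/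
def EMem (z : ℕ) (σ : List (Event n)) : Prop :=
  ∀ i : Fin n, crashCount i σ ≤ z * n * stepsBelow i σ

/-- `𝓔_z`: executions satisfying the crash bound. -/
def ESet (n z : ℕ) : Set (List (Event n)) := { σ | EMem z σ }

/-- `𝓔*_z`: executions satisfying the crash bound in every prefix. -/
def EStarSet (n z : ℕ) : Set (List (Event n)) := { σ | ∀ τ, τ <+: σ → EMem z τ }

/-- `e` is an event by a process in `P`. -/
def eventBy (P : Set (Fin n)) : Event n → Prop
  | .step i => i ∈ P
  | .crash i => i ∈ P

/-- The set of processes `P` is `v`-univalent in the execution `α` from `C` with respect to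
the set of executions `𝒜`. -/
def VUnivalentIn (A : Algorithm n) (input : Fin n → Bool) (C : Config A)
    (𝒜 : Set (List (Event n))) (P : Set (Fin n)) (α : List (Event n)) (v : Bool) : Prop :=
  α ∈ 𝒜 ∧ ∀ β : List (Event n), (∀ e ∈ β, eventBy P e) → (α ++ β) ∈ 𝒜 →
    ∀ (i : Fin n) (w : Bool), HasDecided A input C (α ++ β) i w → w = v

/-- The set of processes `P` is bivalent in the execution `α` from `C` with respect to `𝒜`. -/
def BivalentIn (A : Algorithm n) (input : Fin n → Bool) (C : Config A)
    (𝒜 : Set (List (Event n))) (P : Set (Fin n)) (α : List (Event n)) : Prop :=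
  ∀ v : Bool, ∃ β : List (Event n), (∀ e ∈ β, eventBy P e) ∧ (α ++ β) ∈ 𝒜 ∧
    ∃ i : Fin n, HasDecided A input C (α ++ β) i v

/-- `P` is univalent in `α` with respect to `𝒜`: `v`-univalent for some `v`. -/
def UnivalentIn (A : Algorithm n) (input : Fin n → Bool) (C : Config A)
    (𝒜 : Set (List (Event n))) (P : Set (Fin n)) (α : List (Event n)) : Prop :=
  ∃ v : Bool, VUnivalentIn A input C 𝒜 P α v

/-- `α ∈ 𝒜` is critical with respect to `𝒜`: `α` is bivalent with respect to `𝒜` and every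
nonempty extension of `α` inside `𝒜` is univalent with respect to `𝒜`. -/
def Critical (A : Algorithm n) (input : Fin n → Bool) (C : Config A)
    (𝒜 : Set (List (Event n))) (α : List (Event n)) : Prop :=
  α ∈ 𝒜 ∧ BivalentIn A input C 𝒜 Set.univ α ∧
  ∀ β : List (Event n), β ≠ [] → (α ++ β) ∈ 𝒜 → UnivalentIn A input C 𝒜 Set.univ (α ++ β)

/-- Process `i` is on team `v` in `Cα` (with respect to `𝒜`): `α p_i` is `v`-univalent. -/
def OnTeam (A : Algorithm n) (input : Fin n → Bool) (C : Config A)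
    (𝒜 : Set (List (Event n))) (α : List (Event n)) (i : Fin n) (v : Bool) : Prop :=
  VUnivalentIn A input C 𝒜 Set.univ (α ++ [Event.step i]) v

/-- Process `i` is poised to apply an operation to object `O` in configuration `C`. -/
def PoisedAt (A : Algorithm n) (C : Config A) (i : Fin n) (O : A.ObjIdx) : Prop :=
  ∃ op, A.pending i (C.pstate i) = some ⟨O, op⟩

/-- `σ ∈ 𝒮(P)`: a crash-free schedule in which each process of `P` takes at most one step
and no other process takes a step. -/
def IsSched (P : Set (Fin n)) (σ : List (Event n)) : Prop :=
  ∃ l : List (Fin n), l.Nodup ∧ (∀ j ∈ l, j ∈ P) ∧ σ = l.map Event.step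

/-- The schedule `λ_k = c_k c_{k+1} ⋯ c_{n-1}`. -/
def lambdaSched (n k : ℕ) : List (Event n) :=
  ((List.finRange n).filter fun j => decide (k ≤ j.val)).map Event.crash

/-- `U_v`: the set of values of object `O` reachable from `Dα` by a schedule in `𝒮(𝒫)`
whose first process is on team `v`. -/
def USetCfg (A : Algorithm n) (input : Fin n → Bool) (D : Config A)
    (𝒜 : Set (List (Event n))) (α : List (Event n)) (O : A.ObjIdx) (v : Bool) :
    Set (A.objType O).Value :=
  { w | ∃ (j : Fin n) (σ : List (Event n)), OnTeam A input D 𝒜 α j v ∧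
        IsSched {k : Fin n | k ≠ j} σ ∧
        w = (run A input D (α ++ Event.step j :: σ)).oval O }

/-- The configuration `Dα` is `v`-hiding. -/
def VHiding (A : Algorithm n) (input : Fin n → Bool) (D : Config A)
    (𝒜 : Set (List (Event n))) (α : List (Event n)) (O : A.ObjIdx) (v : Bool) : Prop :=
  USetCfg A input D 𝒜 α O false ∩ USetCfg A input D 𝒜 α O true = ∅ ∧
  (run A input D α).oval O ∈ USetCfg A input D 𝒜 α O v

/-- The configuration `Dα` is `n`-recording. -/
def NRecordingCfg (A : Algorithm n) (input : Fin n → Bool) (D : Config A)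
    (𝒜 : Set (List (Event n))) (α : List (Event n)) (O : A.ObjIdx) : Prop :=
  USetCfg A input D 𝒜 α O false ∩ USetCfg A input D 𝒜 α O true = ∅ ∧
  ∀ v : Bool, (run A input D α).oval O ∈ USetCfg A input D 𝒜 α O v →
    ∃! j : Fin n, OnTeam A input D 𝒜 α j (!v)

/-- Apply the operations `o i` of the processes listed in `σ`, in order, to an object of type
`T`, starting from the value `u`. -/
def applyOps (T : DetType) (o : Fin n → T.Op) : T.Value → List (Fin n) → T.Value
  | u, [] => u
  | u, i :: σ => applyOps T o (T.δ u (o i)).2 σ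

/-- `U_x`: the set of values obtainable by applying the operations of the processes of a
duplicate-free schedule whose first process is on team `x` to an object with initial value
`u`. -/
def UVals (T : DetType) (o : Fin n → T.Op) (u : T.Value) (team : Fin n → Bool) (x : Bool) :
    Set T.Value :=
  { v | ∃ (i : Fin n) (σ : List (Fin n)), team i = x ∧ (i :: σ).Nodup ∧
        v = applyOps T o u (i :: σ) }

/-- A deterministic type `T` is `n`-recording. -/
def NRecording (n : ℕ) (T : DetType) : Prop :=
  ∃ (u : T.Value) (team : Fin n → Bool) (o : Fin n → T.Op),
    (∀ x : Bool, ∃ i, team i = x) ∧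
    (UVals T o u team false ∩ UVals T o u team true = ∅) ∧
    (∀ x : Bool, u ∈ UVals T o u team x → ∃! i, team i = !x)

end RecoverableConsensus

namespace RecoverableConsensus

section Helpers

variable {n : ℕ}

lemma run_append (A : Algorithm n) (input : Fin n → Bool) (C : Config A)
    (σ τ : List (Event n)) :
    run A input C (σ ++ τ) = run A input (run A input C σ) τ := by
  induction σ generalizing C with
  | nil => rfl
  | cons e σ ih => exact ih _

lemma EStarSet.of_prefix {z : ℕ} {σ τ : List (Event n)} (h : τ ∈ EStarSet n z) (hp : σ <+: τ) :
    σ ∈ EStarSet n z :=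
  fun _ hρ => h _ (hρ.trans hp)

lemma EStarSet.concat {z : ℕ} {σ : List (Event n)} {e : Event n} (h : σ ∈ EStarSet n z)
    (he : EMem z (σ ++ [e])) : σ ++ [e] ∈ EStarSet n z := by
  intro τ hτ
  rcases List.prefix_concat_iff.1 hτ with rfl | hτ
  · exact he
  · exact h _ hτ

lemma EStarSet.concat_step {z : ℕ} {σ : List (Event n)} (h : σ ∈ EStarSet n z) (j : Fin n) :
    σ ++ [Event.step j] ∈ EStarSet n z := by
  refine EStarSet.concat h fun i => ?_
  have h1 : crashCount i (σ ++ [Event.step j]) = crashCount i σ := by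
    simp [crashCount]
  have h2 : stepsBelow i σ ≤ stepsBelow i (σ ++ [Event.step j]) := by
    simp [stepsBelow]
  rw [h1]
  exact (h σ (List.prefix_refl _) i).trans (Nat.mul_le_mul_left _ h2)

lemma EStarSet.append_steps {z : ℕ} {σ : List (Event n)} (h : σ ∈ EStarSet n z) (j : Fin n)
    (k : ℕ) : σ ++ List.replicate k (Event.step j) ∈ EStarSet n z := by
  induction k with
  | zero => simpa using h
  | succ k ih =>
    rw [List.replicate_succ', ← List.append_assoc]
    exact EStarSet.concat_step ih j

/-- The crash bound on a whole execution depends only on how often each event occurs. -/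
lemma EMem.perm {z : ℕ} {σ τ : List (Event n)} (h : EMem z σ) (hp : σ.Perm τ) : EMem z τ := by
  intro i
  have h1 : crashCount i σ = crashCount i τ := (hp.filter _).length_eq
  have h2 : stepsBelow i σ = stepsBelow i τ := (hp.filter _).length_eq
  rw [← h1, ← h2]
  exact h i

lemma applyEvent_crash_step_comm (A : Algorithm n) (input : Fin n → Bool) (D : Config A)
    {i j : Fin n} (hij : i ≠ j) :
    applyEvent A input (applyEvent A input D (.crash i)) (.step j) =
      applyEvent A input (applyEvent A input D (.step j)) (.crash i) := by
  have hs : (Function.update D.pstate i (A.init i (input i))) j = D.pstate j :=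
    Function.update_of_ne hij.symm _ _
  simp only [applyEvent, hs]
  rcases A.pending j (D.pstate j) with _ | ⟨o, op⟩
  · rfl
  · simp only
    rw [Function.update_comm hij]

/-- A process in its initial state decides when it runs alone, from any configuration. -/
lemma exists_solo_decision {A : Algorithm n} (hA : RecWaitFree A) (input : Fin n → Bool)
    (D : Config A) (i : Fin n) (hi : D.pstate i = A.init i (input i)) :
    ∃ (k : ℕ) (w : Bool),
      A.output i ((run A input D (List.replicate k (Event.step i))).pstate i) = some w := by
  obtain ⟨k, w, h⟩ := hA input D (fun _ => .step i) i (Or.inl hi) (fun m => ⟨m, le_rfl, rfl⟩)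
    ⟨0, fun _ _ => by simp⟩
  refine ⟨k, w, ?_⟩
  have : initSeg (fun _ : ℕ => (Event.step i : Event n)) k = List.replicate k (Event.step i) := by
    simp [initSeg]
  rwa [this] at h

/-- A univalent execution with an extension that decides `v` is `v`-univalent. -/
lemma vUnivalentIn_of_decided {A : Algorithm n} {input : Fin n → Bool} {C : Config A}
    {𝒜 : Set (List (Event n))} {α : List (Event n)} (h : UnivalentIn A input C 𝒜 Set.univ α)
    (β : List (Event n)) (hβ : α ++ β ∈ 𝒜) {i : Fin n} {v : Bool}
    (hd : HasDecided A input C (α ++ β) i v) : VUnivalentIn A input C 𝒜 Set.univ α v := by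
  obtain ⟨w, hw⟩ := h
  have : v = w := hw.2 β (fun e _ => by cases e <;> trivial) hβ i v hd
  rwa [this]

lemma exists_onTeam {A : Algorithm n} (hn : 2 ≤ n) (hA : RecWaitFree A) {input : Fin n → Bool}
    {C : Config A} {z : ℕ} {α : List (Event n)} (hcrit : Critical A input C (EStarSet n z) α)
    (v : Bool) : ∃ i : Fin n, OnTeam A input C (EStarSet n z) α i v := by
  obtain ⟨hα, hbiv, huniv⟩ := hcrit
  let p₀ : Fin n := ⟨0, by omega⟩
  have hstep (j : Fin n) : UnivalentIn A input C (EStarSet n z) Set.univ (α ++ [Event.step j]) :=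
    huniv _ (by simp) (EStarSet.concat_step hα j)
  obtain ⟨β, -, hβ, q, hq⟩ := hbiv v
  rcases β with _ | ⟨_ | i, β⟩
  · refine ⟨p₀, vUnivalentIn_of_decided (hstep p₀) [] ?_ (i := q) ?_⟩
    · simpa using EStarSet.concat_step hα p₀
    · obtain ⟨τ, hτ, ho⟩ := hq
      refine ⟨τ, ?_, ho⟩
      rw [List.append_nil] at hτ ⊢
      exact hτ.trans (List.prefix_append _ _)
  · rename_i j
    exact ⟨j, vUnivalentIn_of_decided (hstep j) β (by simpa using hβ) (i := q) (by simpa using hq)⟩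
  · have hβ' : (α ++ [Event.crash i]) ++ β ∈ EStarSet n z := by simpa using hβ
    have hc : α ++ [Event.crash i] ∈ EStarSet n z :=
      EStarSet.of_prefix hβ' (List.prefix_append _ _)
    have hcv : VUnivalentIn A input C (EStarSet n z) Set.univ (α ++ [Event.crash i]) v :=
      vUnivalentIn_of_decided (huniv _ (by simp) hc) β hβ' (i := q) (by simpa using hq)
    have hi : i ≠ p₀ := by
      rintro rfl
      have h := hc _ (List.prefix_refl _) p₀
      have h0 : stepsBelow p₀ (α ++ [Event.crash p₀]) = 0 := by
        rw [stepsBelow, List.length_eq_zero_iff, List.filter_eq_nil_iff]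
        rintro (j | j) -
        · simp [isStepBelow, p₀, Fin.lt_def]
        · simp [isStepBelow]
      rw [h0] at h
      simp [crashCount] at h
    have hcs : α ++ [Event.crash i] ++ [Event.step p₀] ∈ EStarSet n z :=
      EStarSet.concat_step hc p₀
    have hsc : α ++ [Event.step p₀] ++ [Event.crash i] ∈ EStarSet n z := by
      refine EStarSet.concat (EStarSet.concat_step hα p₀)
        ((hcs _ (List.prefix_refl _)).perm ?_)
      simpa using (List.Perm.swap _ _ _).append_left α
    have heq : run A input C (α ++ [Event.crash i] ++ [Event.step p₀]) =
        run A input C (α ++ [Event.step p₀] ++ [Event.crash i]) := by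
      simp only [run_append]
      exact applyEvent_crash_step_comm A input _ hi
    have hinit : (run A input C (α ++ [Event.step p₀] ++ [Event.crash i])).pstate i =
        A.init i (input i) := by
      simp [run_append, run, applyEvent]
    obtain ⟨k, w, hw⟩ := exists_solo_decision hA input _ i hinit
    have hdsc : HasDecided A input C
        (α ++ [Event.step p₀] ++ [Event.crash i] ++ List.replicate k (Event.step i)) i w :=
      ⟨_, List.prefix_refl _, by rw [run_append]; exact hw⟩
    have hdcs : HasDecided A input C
        (α ++ [Event.crash i] ++ [Event.step p₀] ++ List.replicate k (Event.step i)) i w :=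
      ⟨_, List.prefix_refl _, by rw [run_append, heq]; exact hw⟩
    have hwv : w = v := by
      refine hcv.2 ([Event.step p₀] ++ List.replicate k (Event.step i))
        (fun e _ => by cases e <;> trivial) ?_ i w ?_
      · rw [← List.append_assoc]
        exact EStarSet.append_steps hcs i k
      · rw [← List.append_assoc]
        exact hdcs
    subst hwv
    refine ⟨p₀, vUnivalentIn_of_decided (hstep p₀)
      ([Event.crash i] ++ List.replicate k (Event.step i)) ?_ (i := i) ?_⟩
    · rw [← List.append_assoc]
      exact EStarSet.append_steps hsc i k
    · rw [← List.append_assoc]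
      exact hdsc

end Helpers

end RecoverableConsensus

open RecoverableConsensus in
/-- In the critical-execution setting, there is at least one process on
team 0 in `Cα` and at least one process on team 1 in `Cα`. -/
theorem exists_process_on_each_team
    (n : ℕ) (hn : 2 ≤ n) (A : Algorithm n) (hA : SolvesRecConsensus A)
    (input : Fin n → Bool) (C : Config A) (z : ℕ) (hz : 1 ≤ z)
    (α : List (Event n)) (hα : α ∈ EStarSet n z)
    (hcrit : Critical A input C (EStarSet n z) α) :
    (∃ i : Fin n, OnTeam A input C (EStarSet n z) α i false) ∧
    (∃ j : Fin n, OnTeam A input C (EStarSet n z) α j true) := by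
  exact ⟨exists_onTeam hn hA.2.2 hcrit false, exists_onTeam hn hA.2.2 hcrit true⟩
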